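/- (Recurrence relation for 2D q-Euler polynomials.) For every n ≥ 1 the following identity of polynomials in x, y holds: [n]_q · E_{n,q}(qx,y) = [n]_q q^{n} x · E_{n−1,q}(x,y) + Σ_{k=1}^{n} [n choose k]_q q^{n−k} (α_k^E + [k]_q β_{k−1}^E y) E_{n−k,q}(x,y), where E_{n,q}(qx,y) denotes the polynomial obtained from E_{n,q}(x,y) by substituting qx for x. -/

import Mathlib

noncomputable section

open Finset MvPolynomial

/-- The `q`-integer `[n]_q = 1 + q + ⋯ + q^(n-1)`. -/
def qInt {K : Type*} [Field K] (q : K) (n : ℕ) : K := ∑ i ∈ Finset.range n, q ^ i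

/-- The `q`-factorial `[n]_q! = [1]_q [2]_q ⋯ [n]_q`. -/
def qFact {K : Type*} [Field K] (q : K) (n : ℕ) : K := ∏ k ∈ Finset.range n, qInt q (k + 1)

/-- The `q`-binomial coefficient `[n choose k]_q`. -/
def qChoose {K : Type*} [Field K] (q : K) (n k : ℕ) : K :=
  qFact q n / (qFact q k * qFact q (n - k))

/-- The partial `q`-derivative in the variable `v` (v = 0 is `x`, v = 1 is `y`),
the linear operator determined by `D_{q,x}(x^m y^l) = [m]_q x^(m-1) y^l` and
`D_{q,y}(x^m y^l) = [l]_q x^m y^(l-1)`. -/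
def qDeriv {K : Type*} [Field K] (q : K) (v : Fin 2) (P : MvPolynomial (Fin 2) K) :
    MvPolynomial (Fin 2) K :=
  ∑ m ∈ P.support, monomial (m - Finsupp.single v 1) (P.coeff m * qInt q (m v))

/-- Substitution `x ↦ c·x` in a polynomial in the two variables `x = X 0`, `y = X 1`. -/
def substX {K : Type*} [Field K] (c : K) (P : MvPolynomial (Fin 2) K) :
    MvPolynomial (Fin 2) K :=
  aeval (fun i : Fin 2 => if i = 0 then C c * X 0 else X 1) P

/-- Substitution `y ↦ c·y` in a polynomial in the two variables `x = X 0`, `y = X 1`. -/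
def substY {K : Type*} [Field K] (c : K) (P : MvPolynomial (Fin 2) K) :
    MvPolynomial (Fin 2) K :=
  aeval (fun i : Fin 2 => if i = 0 then X 0 else C c * X 1) P

/-- The 2D `q`-Appell polynomials attached to a coefficient sequence `a`:
`A_{n,q}(x,y) = Σ_{i+j+k=n} ([n]_q!/([i]_q![j]_q![k]_q!)) a_i q^(k(k-1)/2) x^j y^k`. -/
def appell {K : Type*} [Field K] (q : K) (a : ℕ → K) (n : ℕ) : MvPolynomial (Fin 2) K :=
  ∑ i ∈ Finset.range (n + 1), ∑ j ∈ Finset.range (n + 1 - i),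
    monomial (Finsupp.single (0 : Fin 2) j + Finsupp.single (1 : Fin 2) (n - i - j))
      (qFact q n / (qFact q i * qFact q j * qFact q (n - i - j)) * a i *
        q ^ ((n - i - j) * (n - i - j - 1) / 2))

/-!
The recurrence is an identity between `q`-exponential generating series `Σ uₙ tⁿ / [n]_q!`. Write
`σ f (t) = f (q t)` and let `θ` be the `q`-analogue of `t d/dt`, which multiplies the `n`-th
coefficient by `[n]_q`; it satisfies `θ (f g) = θ f · σ g + f · θ g` and `σ f = f + (q - 1) θ f`.
The series of `A_{n,q}(qx, y)` is `e_q(qxt) · A(t) · E_q(yt)`, and since `θ e_q(xt) = x t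
e_q(xt)` and `θ E_q(yt) = y t E_q(qyt)`, applying `θ` gives `(q x t · σ A + θ A + y t A) ·
e_q(qxt) · E_q(qyt)`. Hence a recurrence in terms of `σ A · e_q(qxt) · E_q(qyt)`, the series of
`qⁿ A_{n,q}(x, y)`, follows as soon as `θ A = α · σ A` and `A = β · σ A`. For the `q`-Euler
numbers, `A (1 + e_q) = 2`; applying `θ` and multiplying by `σ A` yields `α = -t A e_q / 2`, and
then `β = 1 + (1 - q) α`.
-/

open scoped PowerSeries

section QNumbers

variable {K : Type*} [Field K] (q : K)

theorem qInt_zero : qInt q 0 = 0 := by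
  simp [qInt]

theorem qInt_add (m n : ℕ) : qInt q (m + n) = qInt q m * q ^ n + qInt q n := by
  simp only [qInt, add_comm m n, sum_range_add, pow_add, ← mul_sum]
  ring

theorem sub_one_mul_qInt (n : ℕ) : (q - 1) * qInt q n = q ^ n - 1 :=
  mul_geom_sum q n

theorem qFact_zero : qFact q 0 = 1 := by
  simp [qFact]

theorem qFact_succ (n : ℕ) : qFact q (n + 1) = qFact q n * qInt q (n + 1) :=
  prod_range_succ _ _

variable {q} (hq : ∀ n : ℕ, 1 ≤ n → qInt q n ≠ 0)
include hq

theorem qFact_ne_zero (n : ℕ) : qFact q n ≠ 0 :=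
  prod_ne_zero_iff.2 fun k _ => hq (k + 1) k.succ_pos

theorem inv_qFact_mul_qChoose (n k : ℕ) :
    (qFact q n)⁻¹ * qChoose q n k = (qFact q k)⁻¹ * (qFact q (n - k))⁻¹ := by
  have := qFact_ne_zero hq n
  rw [qChoose]
  field_simp

theorem qChoose_mul_qChoose_sub (n i j : ℕ) :
    qChoose q n i * qChoose q (n - i) j =
      qFact q n / (qFact q i * qFact q j * qFact q (n - i - j)) := by
  have := qFact_ne_zero hq (n - i)
  simp only [qChoose]
  field_simp

theorem inv_qFact_succ_mul_qInt (n : ℕ) :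
    (qFact q (n + 1))⁻¹ * qInt q (n + 1) = (qFact q n)⁻¹ := by
  rw [qFact_succ, mul_inv, inv_mul_cancel_right₀ (hq (n + 1) n.succ_pos)]

end QNumbers

section Theta

variable {K R : Type*} [Field K] [CommRing R] [Algebra K R] (q : K)

/-- The `q`-analogue `θ` of the operator `t d/dt` on formal power series: it multiplies the `n`-th
coefficient by `[n]_q`. In terms of the `q`-derivative `D_q` in `t` it is `t D_q`. -/
def qTheta : R⟦X⟧ →ₗ[K] R⟦X⟧ where
  toFun f := .mk fun n => qInt q n • PowerSeries.coeff n f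
  map_add' f g := by ext n; simp
  map_smul' c f := by ext n; simp [smul_comm c]

@[simp]
theorem coeff_qTheta (f : R⟦X⟧) (n : ℕ) :
    PowerSeries.coeff n (qTheta q f) = qInt q n • PowerSeries.coeff n f := by
  simp [qTheta]

theorem qTheta_C (r : R) : qTheta q (PowerSeries.C r) = 0 := by
  ext n
  cases n <;> simp [qInt_zero, PowerSeries.coeff_C]

theorem qTheta_map_algebraMap (f : K⟦X⟧) :
    qTheta q (PowerSeries.map (algebraMap K R) f) =
      PowerSeries.map (algebraMap K R) (qTheta q f) := by
  ext n
  simp [Algebra.smul_def]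

theorem qTheta_mul (f g : R⟦X⟧) :
    qTheta q (f * g) = qTheta q f * PowerSeries.rescale (algebraMap K R q) g + f * qTheta q g := by
  ext n
  simp only [coeff_qTheta, map_add, PowerSeries.coeff_mul, PowerSeries.coeff_rescale, smul_sum,
    ← sum_add_distrib]
  refine sum_congr rfl fun ij hij => ?_
  rw [← mem_antidiagonal.1 hij, qInt_add]
  simp only [Algebra.smul_def, map_add, map_mul, map_pow]
  ring

theorem rescale_eq_add_qTheta (f : R⟦X⟧) :
    PowerSeries.rescale (algebraMap K R q) f =
      f + PowerSeries.C (algebraMap K R (q - 1)) * qTheta q f := by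
  ext n
  rw [PowerSeries.coeff_rescale, map_add, PowerSeries.coeff_C_mul, coeff_qTheta, Algebra.smul_def,
    ← mul_assoc, ← map_mul, sub_one_mul_qInt, map_sub, map_pow, map_one]
  ring

end Theta

section GeneratingSeries

variable {K R S : Type*} [Field K] [CommRing R] [Algebra K R] [CommRing S] [Algebra K S] (q : K)

/-- The `q`-exponential generating series `Σ uₙ tⁿ / [n]_q!` of a sequence `u` in a `K`-algebra. -/
def qGenSeries (u : ℕ → R) : R⟦X⟧ := .mk fun n => (qFact q n)⁻¹ • u n

/-- The small `q`-exponential `e_q(xt) = Σ (xt)ⁿ / [n]_q!`, as a power series in `t`. -/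
def qExpSmall (x : R) : R⟦X⟧ := qGenSeries q fun n => x ^ n

/-- The big `q`-exponential `E_q(yt) = Σ q^(n(n-1)/2) (yt)ⁿ / [n]_q!`, as a power series in `t`. -/
def qExpBig (y : R) : R⟦X⟧ := qGenSeries q fun n => q ^ (n * (n - 1) / 2) • y ^ n

@[simp]
theorem coeff_qGenSeries (u : ℕ → R) (n : ℕ) :
    PowerSeries.coeff n (qGenSeries q u) = (qFact q n)⁻¹ • u n :=
  PowerSeries.coeff_mk _ _

theorem qGenSeries_add (u v : ℕ → R) :
    qGenSeries q (fun n => u n + v n) = qGenSeries q u + qGenSeries q v := by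
  ext n
  simp

theorem qGenSeries_const_mul (r : R) (u : ℕ → R) :
    qGenSeries q (fun n => r * u n) = PowerSeries.C r * qGenSeries q u := by
  ext n
  simp

theorem map_qGenSeries (φ : R →ₐ[K] S) (u : ℕ → R) :
    PowerSeries.map (φ : R →+* S) (qGenSeries q u) = qGenSeries q fun n => φ (u n) := by
  ext n
  simp

theorem rescale_qGenSeries (r : R) (u : ℕ → R) :
    PowerSeries.rescale r (qGenSeries q u) = qGenSeries q fun n => r ^ n * u n := by
  ext n
  simp

theorem qTheta_qGenSeries (u : ℕ → R) :
    qTheta q (qGenSeries q u) = qGenSeries q fun n => qInt q n • u n := by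
  ext n
  simp [smul_comm (qInt q n)]

theorem rescale_qExpSmall (r x : R) :
    PowerSeries.rescale r (qExpSmall q x) = qExpSmall q (r * x) := by
  simp only [qExpSmall, rescale_qGenSeries, mul_pow]

variable {q} (hq : ∀ n : ℕ, 1 ≤ n → qInt q n ≠ 0)
include hq

theorem qGenSeries_injective : Function.Injective (qGenSeries q : (ℕ → R) → R⟦X⟧) := by
  intro u v huv
  ext n
  have hcoeff := congrArg (PowerSeries.coeff n) huv
  simp only [coeff_qGenSeries] at hcoeff
  exact (IsUnit.mk0 _ (inv_ne_zero (qFact_ne_zero hq n))).smul_left_cancel.1 hcoeff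

theorem qGenSeries_mul (u v : ℕ → R) :
    qGenSeries q u * qGenSeries q v =
      qGenSeries q fun n => ∑ k ∈ range (n + 1), qChoose q n k • (u k * v (n - k)) := by
  ext n
  simp only [PowerSeries.coeff_mul, coeff_qGenSeries, Nat.sum_antidiagonal_eq_sum_range_succ_mk,
    smul_sum, smul_smul, inv_qFact_mul_qChoose hq, smul_mul_smul_comm]

theorem qTheta_qGenSeries_eq_X_mul (u : ℕ → R) :
    qTheta q (qGenSeries q u) = PowerSeries.X * qGenSeries q fun n => u (n + 1) := by
  ext n
  cases n with
  | zero => simp [qInt_zero]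
  | succ n =>
    rw [coeff_qTheta, PowerSeries.coeff_succ_X_mul, coeff_qGenSeries, coeff_qGenSeries, smul_smul,
      mul_comm, inv_qFact_succ_mul_qInt hq]

theorem X_mul_qGenSeries (u : ℕ → R) :
    PowerSeries.X * qGenSeries q u = qGenSeries q fun n => qInt q n • u (n - 1) := by
  rw [← qTheta_qGenSeries, qTheta_qGenSeries_eq_X_mul hq]
  rfl

theorem qTheta_qExpSmall (x : R) :
    qTheta q (qExpSmall q x) = PowerSeries.X * PowerSeries.C x * qExpSmall q x := by
  simp only [qExpSmall, qTheta_qGenSeries_eq_X_mul hq, pow_succ', qGenSeries_const_mul, mul_assoc]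

theorem qTheta_qExpBig (y : R) :
    qTheta q (qExpBig q y) = PowerSeries.X * PowerSeries.C y *
      PowerSeries.rescale (algebraMap K R q) (qExpBig q y) := by
  simp only [qExpBig, qTheta_qGenSeries_eq_X_mul hq, rescale_qGenSeries, mul_assoc,
    ← qGenSeries_const_mul]
  congr! 3 with n
  simp only [Nat.triangle_succ, pow_add, Algebra.smul_def, map_mul, map_pow]
  ring

end GeneratingSeries

section Appell

variable {K : Type*} [Field K] {q : K} (hq : ∀ n : ℕ, 1 ≤ n → qInt q n ≠ 0)
include hq

theorem qGenSeries_appell (a : ℕ → K) :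
    qGenSeries q (appell q a) =
      qGenSeries q (fun n => C (a n)) * (qExpSmall q (X 0) * qExpBig q (X 1)) := by
  rw [qExpSmall, qExpBig, qGenSeries_mul hq, qGenSeries_mul hq]
  congr 1
  ext1 n
  refine sum_congr rfl fun i hi => ?_
  rw [Nat.sub_add_comm (mem_range_succ_iff.1 hi), mul_sum, smul_sum]
  refine sum_congr rfl fun j _ => ?_
  rw [← qChoose_mul_qChoose_sub hq, monomial_add_single, ← C_mul_X_pow_eq_monomial]
  simp only [smul_eq_C_mul, map_mul]
  ring

theorem qGenSeries_substX_appell (c : K) (a : ℕ → K) :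
    qGenSeries q (fun n => substX c (appell q a n)) =
      qGenSeries q (fun n => C (a n)) * (qExpSmall q (C c * X 0) * qExpBig q (X 1)) := by
  simp only [substX, ← map_qGenSeries, qGenSeries_appell hq, map_mul, qExpSmall, qExpBig]
  simp [map_qGenSeries]

theorem qTheta_qGenSeries_substX_appell {a α β : ℕ → K}
    (hα : qTheta q (qGenSeries q a) = qGenSeries q α * PowerSeries.rescale q (qGenSeries q a))
    (hβ : qGenSeries q a = qGenSeries q β * PowerSeries.rescale q (qGenSeries q a)) :
    qTheta q (qGenSeries q fun n => substX q (appell q a n)) =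
      (qGenSeries q (fun n => C (α n)) +
        PowerSeries.C (X 1) * (PowerSeries.X * qGenSeries q fun n => C (β n)) +
        PowerSeries.C (C q * X 0) * PowerSeries.X) *
      PowerSeries.rescale (C q) (qGenSeries q (appell q a)) := by
  have map_C (u : ℕ → K) :
      (qGenSeries q fun n => (C (u n) : MvPolynomial (Fin 2) K)) =
        PowerSeries.map C (qGenSeries q u) :=
    (map_qGenSeries q (Algebra.ofId K _) u).symm
  have hαC : qTheta q (PowerSeries.map (C : K →+* MvPolynomial (Fin 2) K) (qGenSeries q a)) =
      PowerSeries.map C (qGenSeries q α) *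
        PowerSeries.rescale (C q) (PowerSeries.map C (qGenSeries q a)) := by
    rw [PowerSeries.rescale_map, ← map_mul, ← hα]
    exact qTheta_map_algebraMap q _
  have hβC : PowerSeries.map (C : K →+* MvPolynomial (Fin 2) K) (qGenSeries q a) =
      PowerSeries.map C (qGenSeries q β) *
        PowerSeries.rescale (C q) (PowerSeries.map C (qGenSeries q a)) := by
    rw [PowerSeries.rescale_map, ← map_mul, ← hβ]
  rw [qGenSeries_substX_appell hq, qGenSeries_appell hq, map_C, map_C, map_C, mul_left_comm,
    qTheta_mul, qTheta_mul, qTheta_qExpSmall hq, qTheta_qExpBig hq, algebraMap_eq, hαC]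
  simp only [map_mul, rescale_qExpSmall]
  linear_combination PowerSeries.X * PowerSeries.C (X 1) * qExpSmall q (C q * X 0) *
    PowerSeries.rescale (C q) (qExpBig q (X 1)) * hβC

theorem appell_recurrence {a α β : ℕ → K}
    (hα : qTheta q (qGenSeries q a) = qGenSeries q α * PowerSeries.rescale q (qGenSeries q a))
    (hβ : qGenSeries q a = qGenSeries q β * PowerSeries.rescale q (qGenSeries q a))
    (hα0 : α 0 = 0) {n : ℕ} (hn : 1 ≤ n) :
    C (qInt q n) * substX q (appell q a n) =
      (∑ k ∈ Icc 1 n, C (qChoose q n k * q ^ (n - k)) *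
        (C (α k) + C (qInt q k * β (k - 1)) * X 1) * appell q a (n - k)) +
      C (qInt q n * q ^ n) * X 0 * appell q a (n - 1) := by
  have hseries := qTheta_qGenSeries_substX_appell hq hα hβ
  simp only [add_mul _ (PowerSeries.C _ * PowerSeries.X), mul_assoc (PowerSeries.C _),
    rescale_qGenSeries, qTheta_qGenSeries, X_mul_qGenSeries hq,
    ← qGenSeries_const_mul, ← qGenSeries_add, qGenSeries_mul hq] at hseries
  have hcoeff := congrFun (qGenSeries_injective hq hseries) n
  have hpow : C q * C q ^ (n - 1) = (C q ^ n : MvPolynomial (Fin 2) K) :=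
    mul_pow_sub_one (by lia) _
  simp only [smul_eq_C_mul] at hcoeff
  rw [hcoeff, range_eq_Ico, sum_eq_sum_Ico_succ_bot n.add_one_pos, Ico_add_one_right_eq_Icc, hα0,
    qInt_zero, map_zero]
  simp only [zero_mul, mul_zero, zero_add, map_mul, map_pow, ← hpow]
  exact congrArg₂ (· + ·) (sum_congr rfl fun k _ => by ring) (by ring)

end Appell

section Euler

variable {K : Type*} [Field K] {q : K} (hq : ∀ n : ℕ, 1 ≤ n → qInt q n ≠ 0)

variable (q) in
/-- The coefficients `α_k^E` of the recurrence, extended by the value `0` at `k = 0`. -/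
def qEulerAlpha (E : ℕ → K) (k : ℕ) : K :=
  -(qInt q k / 2) * ∑ j ∈ range k, qChoose q (k - 1) j * E j

variable (q) in
/-- The coefficients `β_m^E` of the recurrence, written as `β^E = δ_0 + (1 - q) α^E`. -/
def qEulerBeta (E : ℕ → K) (m : ℕ) : K :=
  (if m = 0 then 1 else 0) + (1 - q) * qEulerAlpha q E m

theorem qEulerAlpha_zero (E : ℕ → K) : qEulerAlpha q E 0 = 0 := by
  simp [qEulerAlpha]

theorem qGenSeries_qEulerBeta (E : ℕ → K) :
    qGenSeries q (qEulerBeta q E) = 1 + PowerSeries.C (1 - q) * qGenSeries q (qEulerAlpha q E) := by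
  rw [← qGenSeries_const_mul]
  ext n
  rw [map_add, coeff_qGenSeries, coeff_qGenSeries, PowerSeries.coeff_one, qEulerBeta, smul_add]
  split_ifs with hn <;> simp [hn, qFact_zero]

include hq

theorem qGenSeries_mul_one_add_qExpSmall {E : ℕ → K} (hE0 : E 0 = 1)
    (hE : ∀ n : ℕ, 1 ≤ n → E n + ∑ k ∈ range (n + 1), qChoose q n k * E k = 0) :
    qGenSeries q E * (1 + qExpSmall q 1) = PowerSeries.C 2 := by
  rw [mul_add, mul_one, qExpSmall, qGenSeries_mul hq, ← qGenSeries_add]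
  ext n
  obtain rfl | hn := n.eq_zero_or_pos
  · simp [hE0, qFact_zero, qChoose, one_add_one_eq_two]
  · simp [PowerSeries.coeff_C, hn.ne', hE n hn]

theorem qGenSeries_qEulerAlpha (E : ℕ → K) :
    qGenSeries q (qEulerAlpha q E) =
      PowerSeries.C (-(1 / 2)) * (PowerSeries.X * (qGenSeries q E * qExpSmall q 1)) := by
  rw [qExpSmall, qGenSeries_mul hq, X_mul_qGenSeries hq, ← qGenSeries_const_mul]
  congr 1
  ext n
  cases n with
  | zero => simp [qEulerAlpha, qInt_zero]
  | succ n =>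
    simp only [qEulerAlpha, Nat.add_sub_cancel, one_pow, mul_one, smul_eq_mul]
    ring

variable [NeZero (2 : K)] {E : ℕ → K}
  (hE : qGenSeries q E * (1 + qExpSmall q 1) = PowerSeries.C 2)
include hE

theorem qTheta_qGenSeries_eq_qEulerAlpha_mul_rescale :
    qTheta q (qGenSeries q E) =
      qGenSeries q (qEulerAlpha q E) * PowerSeries.rescale q (qGenSeries q E) := by
  have hhalf : (PowerSeries.C (-(1 / 2)) * PowerSeries.C 2 : K⟦X⟧) = -1 := by
    rw [← map_mul, neg_mul, one_div_mul_cancel two_ne_zero, map_neg, map_one]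
  have htheta : qTheta q (qGenSeries q E) * PowerSeries.rescale q (1 + qExpSmall q 1) +
      qGenSeries q E * (PowerSeries.X * qExpSmall q 1) = 0 := by
    have hexp : qTheta q (1 + qExpSmall q (1 : K)) = PowerSeries.X * qExpSmall q 1 := by
      rw [map_add, ← map_one PowerSeries.C, qTheta_C, qTheta_qExpSmall hq, map_one, mul_one,
        zero_add]
    rw [← hexp, ← qTheta_C q (2 : K), ← hE, qTheta_mul]
    rfl
  have hrescale : PowerSeries.rescale q (qGenSeries q E) *
      PowerSeries.rescale q (1 + qExpSmall q 1) = PowerSeries.C 2 := by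
    rw [← map_mul, hE, map_ofNat, map_ofNat]
  rw [qGenSeries_qEulerAlpha hq]
  linear_combination PowerSeries.C (-(1 / 2)) * qTheta q (qGenSeries q E) * hrescale
    - PowerSeries.C (-(1 / 2)) * PowerSeries.rescale q (qGenSeries q E) * htheta
    + qTheta q (qGenSeries q E) * hhalf

theorem qGenSeries_eq_qEulerBeta_mul_rescale :
    qGenSeries q E =
      qGenSeries q (qEulerBeta q E) * PowerSeries.rescale q (qGenSeries q E) := by
  have hrescale := rescale_eq_add_qTheta q (qGenSeries q E)
  rw [qTheta_qGenSeries_eq_qEulerAlpha_mul_rescale hq hE] at hrescale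
  rw [qGenSeries_qEulerBeta]
  simp only [Algebra.algebraMap_self, RingHom.id_apply, map_sub, map_one] at hrescale ⊢
  linear_combination -hrescale

end Euler

theorem qEuler2D_recurrence_general
    {K : Type*} [Field K] [NeZero (2 : K)] (q : K)
    (hq : ∀ n : ℕ, 1 ≤ n → qInt q n ≠ 0)
    (E : ℕ → K) (hE0 : E 0 = 1)
    (hE : ∀ n : ℕ, 1 ≤ n → E n + ∑ k ∈ Finset.range (n + 1), qChoose q n k * E k = 0)
    (αE βE : ℕ → K)
    (hαE : ∀ k : ℕ, 1 ≤ k →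
      αE k = -(qInt q k / 2) * ∑ j ∈ Finset.range k, qChoose q (k - 1) j * E j)
    (hβE0 : βE 0 = 1)
    (hβE : ∀ m : ℕ, 1 ≤ m →
      βE m = ((q - 1) * qInt q m / 2) * ∑ j ∈ Finset.range m, qChoose q (m - 1) j * E j)
    (n : ℕ) (hn : 1 ≤ n) :
    C (qInt q n) * substX q (appell q E n) =
      (∑ k ∈ Finset.Icc 1 n, C (qChoose q n k * q ^ (n - k)) *
        (C (αE k) + C (qInt q k * βE (k - 1)) * X 1) * appell q E (n - k)) +
      C (qInt q n * q ^ n) * X 0 * appell q E (n - 1) := by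
  have hA := qGenSeries_mul_one_add_qExpSmall hq hE0 hE
  have hα : ∀ k, 1 ≤ k → αE k = qEulerAlpha q E k := hαE
  have hβ : ∀ m, βE m = qEulerBeta q E m := by
    rintro (_ | m)
    · simp [hβE0, qEulerBeta, qEulerAlpha_zero]
    · rw [hβE (m + 1) m.succ_pos, qEulerBeta, if_neg m.succ_ne_zero, qEulerAlpha]
      ring
  rw [appell_recurrence hq (qTheta_qGenSeries_eq_qEulerAlpha_mul_rescale hq hA)
    (qGenSeries_eq_qEulerBeta_mul_rescale hq hA) (qEulerAlpha_zero E) hn]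
  congr 1
  refine sum_congr rfl fun k hk => ?_
  rw [hα k (mem_Icc.1 hk).1, hβ]

/-- Recurrence relation for 2D `q`-Euler polynomials. -/
theorem qEuler2D_recurrence
    {K : Type*} [Field K] [CharZero K] (q : K) (hq0 : q ≠ 0) (hq1 : q ≠ 1)
    (hq : ∀ n : ℕ, 1 ≤ n → qInt q n ≠ 0)
    (E : ℕ → K) (hE0 : E 0 = 1)
    (hE : ∀ n : ℕ, 1 ≤ n → E n + ∑ k ∈ Finset.range (n + 1), qChoose q n k * E k = 0)
    (αE βE : ℕ → K)
    (hαE : ∀ k : ℕ, 1 ≤ k →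
      αE k = -(qInt q k / 2) * ∑ j ∈ Finset.range k, qChoose q (k - 1) j * E j)
    (hβE0 : βE 0 = 1)
    (hβE : ∀ m : ℕ, 1 ≤ m →
      βE m = ((q - 1) * qInt q m / 2) * ∑ j ∈ Finset.range m, qChoose q (m - 1) j * E j)
    (n : ℕ) (hn : 1 ≤ n) :
    C (qInt q n) * substX q (appell q E n) =
      (∑ k ∈ Finset.Icc 1 n, C (qChoose q n k * q ^ (n - k)) *
        (C (αE k) + C (qInt q k * βE (k - 1)) * X 1) * appell q E (n - k)) +
      C (qInt q n * q ^ n) * X 0 * appell q E (n - 1) := by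
  exact qEuler2D_recurrence_general q hq E hE0 hE αE βE hαE hβE0 hβE n hn
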